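/- arXiv:2203.10329 — 3 statements merged into one kernel-verified Lean document; each statement's English description precedes it below -/
import Mathlib

section
/- Let f : ℝ^d → ℝ be L-smooth, let μ > 0, and let f_μ(x) = E_u[f(x + μ u)] be its Gaussian smoothing. Then f_μ is differentiable and L-smooth, i.e., ‖∇f_μ(x) − ∇f_μ(y)‖ ≤ L‖x − y‖ for all x, y ∈ ℝ^d. -/
open MeasureTheory ProbabilityTheory

/-- The standard multivariate Gaussian distribution `N(0, I_d)` on `ℝ^d`. -/
noncomputable def stdGaussian (d : ℕ) : Measure (EuclideanSpace ℝ (Fin d)) :=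
  (Measure.pi fun _ : Fin d => gaussianReal 0 1).map
    (MeasurableEquiv.toLp 2 (Fin d → ℝ))

section LipschitzDerivative

variable {E : Type*} [NormedAddCommGroup E] [NormedSpace ℝ E] {f : E → ℝ} {L : ℝ}

/-- A Lipschitz derivative grows at most linearly. -/
lemma norm_fderiv_le_linear_of_lipschitz_fderiv
    (hlip : ∀ x y, ‖fderiv ℝ f x - fderiv ℝ f y‖ ≤ L * ‖x - y‖) (y : E) :
    ‖fderiv ℝ f y‖ ≤ ‖fderiv ℝ f 0‖ + |L| * ‖y‖ := by
  have h := hlip y 0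
  rw [sub_zero] at h
  have h₁ : L * ‖y‖ ≤ |L| * ‖y‖ := by gcongr; exact le_abs_self L
  have h₂ := norm_le_norm_add_norm_sub' (fderiv ℝ f y) (fderiv ℝ f 0)
  linarith

/-- A function with Lipschitz derivative grows at most quadratically. -/
lemma norm_le_quadratic_of_lipschitz_fderiv (hdiff : Differentiable ℝ f)
    (hlip : ∀ x y, ‖fderiv ℝ f x - fderiv ℝ f y‖ ≤ L * ‖x - y‖) (y : E) :
    ‖f y‖ ≤ ‖f 0‖ + (‖fderiv ℝ f 0‖ + |L| * ‖y‖) * ‖y‖ := by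
  have h : ‖f y - f 0‖ ≤ (‖fderiv ℝ f 0‖ + |L| * ‖y‖) * ‖y - 0‖ := by
    refine (convex_closedBall (0 : E) ‖y‖).norm_image_sub_le_of_norm_fderiv_le
      (fun x _ => hdiff x) (fun x hx => ?_) (by simp) (by simp)
    rw [mem_closedBall_zero_iff] at hx
    exact (norm_fderiv_le_linear_of_lipschitz_fderiv hlip x).trans (by gcongr)
  rw [sub_zero] at h
  linarith [norm_le_norm_add_norm_sub' (f y) (f 0)]

lemma continuous_fderiv_of_lipschitz
    (hlip : ∀ x y, ‖fderiv ℝ f x - fderiv ℝ f y‖ ≤ L * ‖x - y‖) :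
    Continuous (fderiv ℝ f) := by
  refine (LipschitzWith.of_dist_le_mul (K := ‖L‖₊) fun x y => ?_).continuous
  rw [dist_eq_norm, dist_eq_norm, coe_nnnorm, Real.norm_eq_abs]
  exact (hlip x y).trans (by gcongr; exact le_abs_self L)

variable [MeasurableSpace E] [BorelSpace E]
  {ν : Measure E} [IsProbabilityMeasure ν]

lemma integrable_comp_add_smul_of_lipschitz_fderiv (hν : MemLp id 2 ν)
    (hdiff : Differentiable ℝ f)
    (hlip : ∀ x y, ‖fderiv ℝ f x - fderiv ℝ f y‖ ≤ L * ‖x - y‖) (c : ℝ) (x : E) :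
    Integrable (fun u => f (x + c • u)) ν := by
  have hX : MemLp (fun u : E => x + c • u) 2 ν := (memLp_const x).add (hν.const_smul c)
  have hcont : Continuous fun u : E => f (x + c • u) := hdiff.continuous.comp (by fun_prop)
  have hX₁ : Integrable (fun u : E => ‖x + c • u‖) ν := (hX.integrable one_le_two).norm
  have hX₂ : Integrable (fun u : E => ‖x + c • u‖ ^ 2) ν := hX.integrable_norm_pow two_ne_zero
  refine (((integrable_const ‖f 0‖).add (hX₁.const_mul ‖fderiv ℝ f 0‖)).add
    (hX₂.const_mul |L|)).mono' hcont.aestronglyMeasurable (.of_forall fun u => ?_)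
  refine (norm_le_quadratic_of_lipschitz_fderiv hdiff hlip _).trans_eq ?_
  simp only [Pi.add_apply]
  ring

variable [SecondCountableTopology E]

lemma integrable_fderiv_comp_add_smul (hν : MemLp id 2 ν)
    (hlip : ∀ x y, ‖fderiv ℝ f x - fderiv ℝ f y‖ ≤ L * ‖x - y‖) (c : ℝ) (x : E) :
    Integrable (fun u => fderiv ℝ f (x + c • u)) ν := by
  have hX : MemLp (fun u : E => x + c • u) 2 ν := (memLp_const x).add (hν.const_smul c)
  have hcont : Continuous fun u : E => fderiv ℝ f (x + c • u) :=
    (continuous_fderiv_of_lipschitz hlip).comp (by fun_prop)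
  exact ((integrable_const ‖fderiv ℝ f 0‖).add
    ((hX.integrable one_le_two).norm.const_mul |L|)).mono' hcont.aestronglyMeasurable
    (.of_forall fun u => norm_fderiv_le_linear_of_lipschitz_fderiv hlip _)

/-- Smoothing by a measure with finite second moment commutes with differentiation. -/
lemma hasFDerivAt_integral_comp_add_smul (hν : MemLp id 2 ν) (hdiff : Differentiable ℝ f)
    (hlip : ∀ x y, ‖fderiv ℝ f x - fderiv ℝ f y‖ ≤ L * ‖x - y‖) (c : ℝ) (x : E) :
    HasFDerivAt (fun x => ∫ u, f (x + c • u) ∂ν) (∫ u, fderiv ℝ f (x + c • u) ∂ν) x := by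
  have hint := integrable_fderiv_comp_add_smul hν hlip c x
  refine hasFDerivAt_integral_of_dominated_of_fderiv_le
    (F' := fun x u => fderiv ℝ f (x + c • u))
    (bound := fun u => ‖fderiv ℝ f (x + c • u)‖ + |L|)
    (Metric.ball_mem_nhds x one_pos)
    (.of_forall fun z => (integrable_comp_add_smul_of_lipschitz_fderiv hν hdiff hlip c z).1)
    (integrable_comp_add_smul_of_lipschitz_fderiv hν hdiff hlip c x) hint.1
    (.of_forall fun u z hz => ?_) (hint.norm.add (integrable_const _))
    (.of_forall fun u z _ => (hasFDerivAt_comp_add_right (c • u)).2 (hdiff _).hasFDerivAt)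
  have h := hlip (z + c • u) (x + c • u)
  rw [add_sub_add_right_eq_sub] at h
  have hz' : ‖z - x‖ ≤ 1 := (mem_ball_iff_norm.1 hz).le
  have h₁ : L * ‖z - x‖ ≤ |L| * 1 := by gcongr; exact le_abs_self L
  have h₂ := norm_le_norm_add_norm_sub' (fderiv ℝ f (z + c • u)) (fderiv ℝ f (x + c • u))
  linarith

/-- Smoothing by a probability measure preserves the Lipschitz constant of the derivative. -/
lemma norm_integral_fderiv_sub_le (hν : MemLp id 2 ν)
    (hlip : ∀ x y, ‖fderiv ℝ f x - fderiv ℝ f y‖ ≤ L * ‖x - y‖) (c : ℝ) (x y : E) :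
    ‖(∫ u, fderiv ℝ f (x + c • u) ∂ν) - ∫ u, fderiv ℝ f (y + c • u) ∂ν‖ ≤ L * ‖x - y‖ := by
  rw [← integral_sub (integrable_fderiv_comp_add_smul hν hlip c x)
    (integrable_fderiv_comp_add_smul hν hlip c y)]
  refine (norm_integral_le_of_norm_le_const (C := L * ‖x - y‖)
    (.of_forall fun u => ?_)).trans_eq (by simp)
  simpa only [add_sub_add_right_eq_sub] using hlip (x + c • u) (y + c • u)

end LipschitzDerivative

lemma norm_gradient_sub_gradient {E : Type*} [NormedAddCommGroup E] [InnerProductSpace ℝ E]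
    [CompleteSpace E] (f : E → ℝ) (x y : E) :
    ‖gradient f x - gradient f y‖ = ‖fderiv ℝ f x - fderiv ℝ f y‖ := by
  rw [gradient, gradient, ← map_sub, LinearIsometryEquiv.norm_map]

lemma stdGaussian_eq_stdGaussian_euclideanSpace (d : ℕ) :
    _root_.stdGaussian d = ProbabilityTheory.stdGaussian (EuclideanSpace ℝ (Fin d)) :=
  map_pi_eq_stdGaussian

/-- If `f : ℝ^d → ℝ` is `L`-smooth and `f_μ` is its Gaussian smoothing with parameter `μ > 0`,
then `f_μ` is differentiable and `L`-smooth. -/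
theorem gaussian_smoothing_is_L_smooth
    (d : ℕ) (L μ : ℝ) (hμ : 0 < μ)
    (f : EuclideanSpace ℝ (Fin d) → ℝ)
    (hdiff : Differentiable ℝ f)
    (hlip : ∀ x y, ‖gradient f x - gradient f y‖ ≤ L * ‖x - y‖)
    (fμ : EuclideanSpace ℝ (Fin d) → ℝ)
    (hfμ : ∀ x, fμ x = ∫ u, f (x + μ • u) ∂(stdGaussian d)) :
    Differentiable ℝ fμ ∧ ∀ x y, ‖gradient fμ x - gradient fμ y‖ ≤ L * ‖x - y‖ := by
  obtain rfl : fμ = fun x => ∫ u, f (x + μ • u) ∂(_root_.stdGaussian d) := funext hfμ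
  simp only [norm_gradient_sub_gradient, stdGaussian_eq_stdGaussian_euclideanSpace] at hlip ⊢
  have hν : MemLp id 2 (ProbabilityTheory.stdGaussian (EuclideanSpace ℝ (Fin d))) :=
    IsGaussian.memLp_two_id
  have hderiv := hasFDerivAt_integral_comp_add_smul hν hdiff hlip μ
  refine ⟨fun x => (hderiv x).differentiableAt, fun x y => ?_⟩
  rw [(hderiv x).fderiv, (hderiv y).fderiv]
  exact norm_integral_fderiv_sub_le hν hlip μ x y
end

section
/- Let f : ℝ^d → ℝ be L-smooth, let μ > 0, and let f_μ be its Gaussian smoothing. Then for every x ∈ ℝ^d, the two-point Gaussian gradient estimator is an unbiased estimate of ∇f_μ(x): ∇f_μ(x) = E_u[ ((f(x + μ u) − f(x))/μ) · u ], where u ~ N(0, I_d). -/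
open MeasureTheory ProbabilityTheory

section Gaussian

variable {E : Type*} [NormedAddCommGroup E] [InnerProductSpace ℝ E]

/-- The Lebesgue density of the standard Gaussian measure on `E`. -/
noncomputable def stdGaussianPDFReal (x : E) : ℝ :=
  ((2 * Real.pi) ^ (Module.finrank ℝ E / 2 : ℝ))⁻¹ * Real.exp (-(1 / 2) * ‖x‖ ^ 2)

lemma stdGaussianPDFReal_nonneg (x : E) : 0 ≤ stdGaussianPDFReal x := by
  unfold stdGaussianPDFReal
  positivity

lemma hasFDerivAt_stdGaussianPDFReal (x : E) :
    HasFDerivAt (stdGaussianPDFReal (E := E)) (-stdGaussianPDFReal x • innerSL ℝ x) x := by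
  have h := ((((hasStrictFDerivAt_norm_sq x).hasFDerivAt.const_mul (-(1 / 2) : ℝ)).exp).const_mul
    ((2 * Real.pi) ^ (Module.finrank ℝ E / 2 : ℝ))⁻¹)
  refine h.congr_fderiv ?_
  ext v
  simp [stdGaussianPDFReal]
  ring

variable [MeasurableSpace E] [BorelSpace E]

lemma measurable_stdGaussianPDFReal : Measurable (stdGaussianPDFReal (E := E)) :=
  (continuous_iff_continuousAt.2
    fun x => (hasFDerivAt_stdGaussianPDFReal x).continuousAt).measurable

variable [FiniteDimensional ℝ E]

lemma integrable_stdGaussianPDFReal : Integrable (stdGaussianPDFReal (E := E)) := by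
  refine Integrable.const_mul (Integrable.of_integral_ne_zero ?_) _
  rw [GaussianFourier.integral_rexp_neg_mul_sq_norm (by norm_num)]
  positivity

lemma stdGaussian_eq_withDensity :
    ProbabilityTheory.stdGaussian E =
      volume.withDensity fun x => ENNReal.ofReal (stdGaussianPDFReal x) := by
  have := isFiniteMeasure_withDensity_ofReal (integrable_stdGaussianPDFReal (E := E)).2
  refine Measure.ext_of_charFun (funext fun t => ?_)
  rw [charFun_stdGaussian, charFun_apply,
    integral_withDensity_eq_integral_toReal_smul measurable_stdGaussianPDFReal.ennreal_ofReal
      (by simp)]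
  have hb : (0 : ℝ) < (1 / 2 : ℂ).re := by norm_num
  have key := GaussianFourier.integral_cexp_neg_mul_sq_norm_add hb Complex.I t
  have hint (x : E) : (ENNReal.ofReal (stdGaussianPDFReal x)).toReal •
      Complex.exp (inner ℝ x t * Complex.I) =
      (((2 * Real.pi) ^ (Module.finrank ℝ E / 2 : ℝ))⁻¹ : ℝ) *
        Complex.exp (-(1 / 2) * ‖x‖ ^ 2 + Complex.I * inner ℝ t x) := by
    rw [ENNReal.toReal_ofReal (stdGaussianPDFReal_nonneg x), Complex.real_smul,
      stdGaussianPDFReal, Complex.exp_add, real_inner_comm, mul_comm Complex.I]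
    push_cast
    ring
  have hZ : (Real.pi / (1 / 2) : ℂ) ^ (Module.finrank ℝ E / 2 : ℂ) =
      (((2 * Real.pi) ^ (Module.finrank ℝ E / 2 : ℝ) : ℝ) : ℂ) := by
    rw [Complex.ofReal_cpow (by positivity)]
    push_cast
    congr 1
    ring
  have hZ0 : (((2 * Real.pi) ^ (Module.finrank ℝ E / 2 : ℝ) : ℝ) : ℂ) ≠ 0 := by
    exact_mod_cast (by positivity : (0 : ℝ) < (2 * Real.pi) ^ (Module.finrank ℝ E / 2 : ℝ)).ne'
  simp_rw [hint]
  rw [integral_const_mul, key, hZ, Complex.ofReal_inv, inv_mul_cancel_left₀ hZ0, Complex.I_sq]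
  congr 1
  ring

/-- Gaussian integration by parts (Stein's lemma) for the standard Gaussian measure. -/
lemma integral_mul_inner_stdGaussian {g : E → ℝ} (hg : Differentiable ℝ g) (v : E)
    (hint : Integrable g (ProbabilityTheory.stdGaussian E))
    (hint_inner : Integrable (fun u => g u * inner ℝ u v) (ProbabilityTheory.stdGaussian E))
    (hint_fderiv : Integrable (fun u => fderiv ℝ g u v) (ProbabilityTheory.stdGaussian E)) :
    ∫ u, g u * inner ℝ u v ∂(ProbabilityTheory.stdGaussian E) =
      ∫ u, fderiv ℝ g u v ∂(ProbabilityTheory.stdGaussian E) := by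
  have hmeas := (measurable_stdGaussianPDFReal (E := E)).ennreal_ofReal
  rw [stdGaussian_eq_withDensity, integrable_withDensity_iff hmeas (by simp)]
    at hint hint_inner hint_fderiv
  rw [stdGaussian_eq_withDensity,
    integral_withDensity_eq_integral_toReal_smul hmeas (by simp),
    integral_withDensity_eq_integral_toReal_smul hmeas (by simp)]
  simp only [ENNReal.toReal_ofReal (stdGaussianPDFReal_nonneg _), smul_eq_mul] at *
  have hderiv (u : E) : fderiv ℝ (stdGaussianPDFReal (E := E)) u v =
      -(stdGaussianPDFReal u * inner ℝ u v) := by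
    simp [(hasFDerivAt_stdGaussianPDFReal u).fderiv]
  have h := integral_mul_fderiv_eq_neg_fderiv_mul_of_integrable (μ := volume) (v := v)
    hint_fderiv (g := stdGaussianPDFReal) (f := g)
    (by
      refine hint_inner.neg.congr (ae_of_all _ fun u => ?_)
      simp only [hderiv, Pi.neg_apply]
      ring) hint (fun u _ => hg u)
    (fun u _ => (hasFDerivAt_stdGaussianPDFReal u).differentiableAt)
  simp only [hderiv, mul_neg, integral_neg, neg_inj] at h
  calc _ = ∫ u, g u * (stdGaussianPDFReal u * inner ℝ u v) := by
        congr with u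
        ring
    _ = _ := h
    _ = _ := by
        congr with u
        ring

lemma integrable_stdGaussian_of_norm_le_pow {F : Type*} [NormedAddCommGroup F] {h : E → F}
    (hh : Continuous h) (C : ℝ) (n : ℕ) (hC : ∀ u, ‖h u‖ ≤ C * (1 + ‖u‖) ^ n) :
    Integrable h (ProbabilityTheory.stdGaussian E) := by
  have hmem : MemLp (fun u : E => 1 + ‖u‖) n (ProbabilityTheory.stdGaussian E) :=
    (memLp_const (1 : ℝ)).add
      (IsGaussian.memLp_id (ProbabilityTheory.stdGaussian E) n (by simp)).norm
  have hpow := (hmem.integrable_norm_pow').const_mul C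
  refine hpow.mono' hh.aestronglyMeasurable (ae_of_all _ fun u => ?_)
  rw [Real.norm_of_nonneg (by positivity)]
  exact hC u

end Gaussian

section Smooth

variable {E : Type*} [NormedAddCommGroup E] [InnerProductSpace ℝ E]

lemma norm_fderiv_sub_le_of_norm_gradient_sub_le [CompleteSpace E] {f : E → ℝ} {L : ℝ}
    (hlip : ∀ x y, ‖gradient f x - gradient f y‖ ≤ L * ‖x - y‖) (x y : E) :
    ‖fderiv ℝ f x - fderiv ℝ f y‖ ≤ |L| * ‖x - y‖ := by
  have h := hlip x y
  rw [gradient, gradient, ← map_sub, LinearIsometryEquiv.norm_map] at h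
  exact h.trans (by gcongr; exact le_abs_self L)

lemma norm_fderiv_le_add_of_lipschitz_fderiv {f : E → ℝ} {L : ℝ}
    (hlip : ∀ x y, ‖fderiv ℝ f x - fderiv ℝ f y‖ ≤ L * ‖x - y‖) (x y : E) :
    ‖fderiv ℝ f y‖ ≤ ‖fderiv ℝ f x‖ + L * ‖y - x‖ := by
  have := norm_le_norm_add_norm_sub (fderiv ℝ f x) (fderiv ℝ f y)
  rw [norm_sub_rev] at this
  linarith [hlip y x]

lemma abs_sub_le_of_lipschitz_fderiv {f : E → ℝ} {L : ℝ} (hL : 0 ≤ L)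
    (hdiff : Differentiable ℝ f)
    (hlip : ∀ x y, ‖fderiv ℝ f x - fderiv ℝ f y‖ ≤ L * ‖x - y‖) (x h : E) :
    |f (x + h) - f x| ≤ (‖fderiv ℝ f x‖ + L * ‖h‖) * ‖h‖ := by
  have := (convex_closedBall x ‖h‖).norm_image_sub_le_of_norm_fderiv_le (𝕜 := ℝ) (f := f)
    (C := ‖fderiv ℝ f x‖ + L * ‖h‖) (fun y _ => hdiff y)
    (fun y hy => (norm_fderiv_le_add_of_lipschitz_fderiv hlip x y).trans (by
      gcongr
      exact mem_closedBall_iff_norm.1 hy))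
    (Metric.mem_closedBall_self (norm_nonneg h)) (y := x + h) (by simp)
  simpa using this

end Smooth

lemma hasFDerivAt_integral_stdGaussian_smoothing {E : Type*} [NormedAddCommGroup E]
    [InnerProductSpace ℝ E] [FiniteDimensional ℝ E] [MeasurableSpace E] [BorelSpace E]
    {f : E → ℝ} {L : ℝ} (hL : 0 ≤ L) (hdiff : Differentiable ℝ f)
    (hlip : ∀ x y, ‖fderiv ℝ f x - fderiv ℝ f y‖ ≤ L * ‖x - y‖)
    (hcont : Continuous (fderiv ℝ f)) (μ : ℝ) (x : E)
    (hint : Integrable (fun u => f (x + μ • u)) (ProbabilityTheory.stdGaussian E)) :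
    HasFDerivAt (fun y => ∫ u, f (y + μ • u) ∂(ProbabilityTheory.stdGaussian E))
      (∫ u, fderiv ℝ f (x + μ • u) ∂(ProbabilityTheory.stdGaussian E)) x := by
  refine hasFDerivAt_integral_of_dominated_of_fderiv_le (Metric.ball_mem_nhds x one_pos)
    (F' := fun y u => fderiv ℝ f (y + μ • u))
    (bound := fun u => ‖fderiv ℝ f x‖ + L * (1 + |μ| * ‖u‖))
    (Filter.Eventually.of_forall fun y => ?_) hint ?_
    (ae_of_all _ fun u y hy => ?_) ?_ (ae_of_all _ fun u y _ => ?_)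
  · exact (hdiff.continuous.comp (by fun_prop)).aestronglyMeasurable
  · exact (hcont.comp (by fun_prop)).aestronglyMeasurable
  · refine (norm_fderiv_le_add_of_lipschitz_fderiv hlip x _).trans ?_
    gcongr
    calc ‖y + μ • u - x‖ = ‖(y - x) + μ • u‖ := by congr 1; abel
      _ ≤ ‖y - x‖ + ‖μ • u‖ := norm_add_le _ _
      _ ≤ 1 + |μ| * ‖u‖ := by
        rw [norm_smul, Real.norm_eq_abs]
        gcongr
        exact (mem_ball_iff_norm.1 hy).le
  · exact (integrable_const _).add (((integrable_const _).add
      (IsGaussian.integrable_id.norm.const_mul _)).const_mul _)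
  · exact (hasFDerivAt_comp_add_right (μ • u)).2 (hdiff (y + μ • u)).hasFDerivAt

/-- For a function with Lipschitz derivative, the two-point Gaussian estimator is unbiased. -/
lemma gradient_integral_stdGaussian_smoothing {E : Type*} [NormedAddCommGroup E]
    [InnerProductSpace ℝ E] [FiniteDimensional ℝ E] [MeasurableSpace E] [BorelSpace E]
    {f : E → ℝ} {L : ℝ} (hL : 0 ≤ L) (hdiff : Differentiable ℝ f)
    (hlip : ∀ x y, ‖fderiv ℝ f x - fderiv ℝ f y‖ ≤ L * ‖x - y‖)
    {μ : ℝ} (hμ : 0 < μ) (x : E) :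
    gradient (fun y => ∫ u, f (y + μ • u) ∂(ProbabilityTheory.stdGaussian E)) x =
      ∫ u, ((f (x + μ • u) - f x) / μ) • u ∂(ProbabilityTheory.stdGaussian E) := by
  have hcont : Continuous (fderiv ℝ f) :=
    (LipschitzWith.of_dist_le_mul (K := L.toNNReal) fun a b => by
      simpa [dist_eq_norm, hL] using hlip a b).continuous
  have hfcont := hdiff.continuous
  set C := ‖fderiv ℝ f x‖ + L * μ with hC
  have hC0 : 0 ≤ C := by positivity
  set g : E → ℝ := fun u => (f (x + μ • u) - f x) / μ with hg
  have hgcont : Continuous g := by fun_prop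
  have hgbound (u : E) : ‖g u‖ ≤ C * (1 + ‖u‖) ^ 2 := by
    have h := abs_sub_le_of_lipschitz_fderiv hL hdiff hlip x (μ • u)
    rw [norm_smul, Real.norm_of_nonneg hμ.le] at h
    rw [hg, Real.norm_eq_abs, abs_div, abs_of_pos hμ, div_le_iff₀ hμ]
    refine h.trans ?_
    have hu := norm_nonneg u
    have hF := norm_nonneg (fderiv ℝ f x)
    calc (‖fderiv ℝ f x‖ + L * (μ * ‖u‖)) * (μ * ‖u‖)
        ≤ (‖fderiv ℝ f x‖ * (1 + ‖u‖) + L * (μ * (1 + ‖u‖))) * (μ * (1 + ‖u‖)) := by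
          gcongr
          · nlinarith
          · linarith
          · linarith
      _ = C * (1 + ‖u‖) ^ 2 * μ := by rw [hC]; ring
  have hgint : Integrable g (ProbabilityTheory.stdGaussian E) :=
    integrable_stdGaussian_of_norm_le_pow hgcont C 2 hgbound
  have hgsmul : Integrable (fun u => g u • u) (ProbabilityTheory.stdGaussian E) := by
    refine integrable_stdGaussian_of_norm_le_pow (by fun_prop) C 3 fun u => ?_
    rw [norm_smul, pow_succ, ← mul_assoc]
    gcongr
    · exact hgbound u
    · linarith
  have hfint : Integrable (fun u => f (x + μ • u)) (ProbabilityTheory.stdGaussian E) := by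
    refine ((hgint.mul_const μ).add (integrable_const (f x))).congr (ae_of_all _ fun u => ?_)
    simp [hg, hμ.ne']
  have hfderivint : Integrable (fun u => fderiv ℝ f (x + μ • u))
      (ProbabilityTheory.stdGaussian E) := by
    refine integrable_stdGaussian_of_norm_le_pow (by fun_prop) C 1 fun u => ?_
    refine (norm_fderiv_le_add_of_lipschitz_fderiv hlip x _).trans ?_
    rw [add_sub_cancel_left, norm_smul, Real.norm_of_nonneg hμ.le, hC]
    nlinarith [norm_nonneg (fderiv ℝ f x), norm_nonneg u, mul_nonneg hL hμ.le,
      mul_nonneg (norm_nonneg (fderiv ℝ f x)) (norm_nonneg u)]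
  have hgderiv (u : E) : HasFDerivAt g (fderiv ℝ f (x + μ • u)) u := by
    have hinner : HasFDerivAt (fun w : E => x + μ • w) (μ • ContinuousLinearMap.id ℝ E) u :=
      ((hasFDerivAt_id u).const_smul μ).const_add x
    refine ((((hdiff _).hasFDerivAt.comp u hinner).sub_const (f x)).mul_const μ⁻¹).congr_fderiv ?_
    ext v
    simp [hμ.ne']
  refine ext_inner_right ℝ fun v => ?_
  rw [gradient, InnerProductSpace.toDual_symm_apply,
    (hasFDerivAt_integral_stdGaussian_smoothing hL hdiff hlip hcont μ x hfint).fderiv,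
    ContinuousLinearMap.integral_apply hfderivint, real_inner_comm, ← integral_inner hgsmul]
  have hstein := integral_mul_inner_stdGaussian (fun u => (hgderiv u).differentiableAt) v hgint
    ((hgsmul.inner_const v).congr (ae_of_all _ fun u => by simp [real_inner_smul_left]))
    (by simpa only [(hgderiv _).fderiv] using hfderivint.apply_continuousLinearMap v)
  simp only [(hgderiv _).fderiv] at hstein
  rw [← hstein]
  congr with u
  rw [real_inner_smul_right, real_inner_comm]

/-- The two-point Gaussian gradient estimator is an unbiased estimate of the gradient of the
Gaussian smoothing `f_μ`. -/
theorem gaussian_smoothing_unbiased_estimator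
    (d : ℕ) (L μ : ℝ) (hμ : 0 < μ)
    (f : EuclideanSpace ℝ (Fin d) → ℝ)
    (hdiff : Differentiable ℝ f)
    (hlip : ∀ x y, ‖gradient f x - gradient f y‖ ≤ L * ‖x - y‖)
    (fμ : EuclideanSpace ℝ (Fin d) → ℝ)
    (hfμ : ∀ x, fμ x = ∫ u, f (x + μ • u) ∂(stdGaussian d))
    (x : EuclideanSpace ℝ (Fin d)) :
    gradient fμ x = ∫ u, ((f (x + μ • u) - f x) / μ) • u ∂(stdGaussian d) := by
  obtain rfl : fμ = fun x => ∫ u, f (x + μ • u) ∂(stdGaussian d) := funext hfμ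
  have hstd : _root_.stdGaussian d = ProbabilityTheory.stdGaussian (EuclideanSpace ℝ (Fin d)) :=
    map_pi_eq_stdGaussian
  rw [hstd]
  exact gradient_integral_stdGaussian_smoothing (abs_nonneg L) hdiff
    (norm_fderiv_sub_le_of_norm_gradient_sub_le hlip) hμ x
end

section
/- Let f : ℝ^d → ℝ be L-smooth and let μ > 0. Then for every x ∈ ℝ^d, the second moment of the two-point Gaussian gradient estimator satisfies E_u[ ‖ĝ_μ(x; u)‖² ] ≤ 2(d + 4) ‖∇f(x)‖² + μ² L² (d + 6)³ / 2, where u ~ N(0, I_d). -/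
open MeasureTheory ProbabilityTheory

/-- `f` is integrable with respect to `m`, with integral `c`. -/
def HasMean {α : Type*} [MeasurableSpace α] (f : α → ℝ) (c : ℝ) (m : Measure α) : Prop :=
  Integrable f m ∧ ∫ x, f x ∂m = c

namespace HasMean

variable {α β : Type*} [MeasurableSpace α] [MeasurableSpace β] {m : Measure α} {n : Measure β}
  {f g : α → ℝ} {a b : ℝ}

lemma add (hf : HasMean f a m) (hg : HasMean g b m) :
    HasMean (fun x => f x + g x) (a + b) m :=
  ⟨hf.1.add hg.1, by rw [integral_add hf.1 hg.1, hf.2, hg.2]⟩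

lemma const_mul (c : ℝ) (hf : HasMean f a m) : HasMean (fun x => c * f x) (c * a) m :=
  ⟨hf.1.const_mul c, by rw [integral_const_mul, hf.2]⟩

lemma mul_prod [SFinite m] [SFinite n] {g : β → ℝ} (hf : HasMean f a m) (hg : HasMean g b n) :
    HasMean (fun p : α × β => f p.1 * g p.2) (a * b) (m.prod n) :=
  ⟨hf.1.mul_prod hg.1, by rw [integral_prod_mul, hf.2, hg.2]⟩

lemma congr (hf : HasMean f a m) (hfg : ∀ x, g x = f x) (hab : b = a) : HasMean g b m := by
  rwa [funext hfg, hab]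

lemma of_measurePreserving {e : α ≃ᵐ β} (he : MeasurePreserving e m n) {g : β → ℝ}
    (hg : HasMean g a n) : HasMean (fun x => g (e x)) a m :=
  ⟨(he.integrable_comp_emb e.measurableEmbedding).2 hg.1,
    by rw [he.integral_comp e.measurableEmbedding g, hg.2]⟩

end HasMean

lemma integrable_pow_gaussianReal (n : ℕ) : Integrable (fun x => x ^ n) (gaussianReal 0 1) := by
  have h := (memLp_id_gaussianReal (μ := 0) (v := 1) n).integrable_norm_pow'
  refine h.mono' (by fun_prop) (.of_forall fun x => ?_)
  simp

lemma integrable_gaussianPDFReal_mul_pow (n : ℕ) :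
    Integrable (fun x => gaussianPDFReal 0 1 x * x ^ n) := by
  have h := integrable_pow_gaussianReal n
  rw [gaussianReal_of_var_ne_zero _ one_ne_zero, integrable_withDensity_iff_integrable_smul'
    (measurable_gaussianPDF _ _) (.of_forall fun _ => gaussianPDF_lt_top)] at h
  simpa [toReal_gaussianPDF] using h

lemma integral_pow_gaussianReal (n : ℕ) :
    ∫ x, x ^ n ∂(gaussianReal 0 1) = ∫ x, gaussianPDFReal 0 1 x * x ^ n := by
  simp [integral_gaussianReal_eq_integral_smul one_ne_zero]

lemma hasDerivAt_gaussianPDFReal (x : ℝ) :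
    HasDerivAt (gaussianPDFReal 0 1) (-(x * gaussianPDFReal 0 1 x)) x := by
  have h : HasDerivAt (fun y : ℝ => -(y - 0) ^ 2 / (2 * ((1 : NNReal) : ℝ))) (-x) x := by
    have := ((((hasDerivAt_id x).sub_const 0).pow 2).neg).div_const (2 * ((1 : NNReal) : ℝ))
    refine this.congr_deriv ?_
    simp only [NNReal.coe_one, id]
    ring
  refine (h.exp.const_mul _).congr_deriv ?_
  rw [gaussianPDFReal]
  ring

/-- The moment recursion of the standard Gaussian, obtained by integrating by parts. -/
lemma integral_pow_add_two_gaussianReal (n : ℕ) :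
    ∫ x, x ^ (n + 2) ∂(gaussianReal 0 1) = (n + 1) * ∫ x, x ^ n ∂(gaussianReal 0 1) := by
  have hd (x : ℝ) : HasDerivAt (fun y => gaussianPDFReal 0 1 y * y ^ (n + 1))
      ((n + 1) * (gaussianPDFReal 0 1 x * x ^ n) - gaussianPDFReal 0 1 x * x ^ (n + 2)) x := by
    refine ((hasDerivAt_gaussianPDFReal x).mul (hasDerivAt_pow (n + 1) x)).congr_deriv ?_
    push_cast
    ring
  have hi := (integrable_gaussianPDFReal_mul_pow n).const_mul ((n : ℝ) + 1)
  have hi' := integrable_gaussianPDFReal_mul_pow (n + 2)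
  have h := integral_eq_zero_of_hasDerivAt_of_integrable hd (hi.sub hi')
    (integrable_gaussianPDFReal_mul_pow (n + 1))
  rw [integral_sub hi hi', integral_const_mul] at h
  rw [integral_pow_gaussianReal, integral_pow_gaussianReal]
  linarith

lemma hasMean_pow_gaussianReal {n : ℕ} {c : ℝ} (h : ∫ x, x ^ n ∂(gaussianReal 0 1) = c) :
    HasMean (fun x => x ^ n) c (gaussianReal 0 1) :=
  ⟨integrable_pow_gaussianReal n, h⟩

lemma hasMean_pow_zero_gaussianReal : HasMean (fun x => x ^ 0) 1 (gaussianReal 0 1) :=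
  hasMean_pow_gaussianReal (by simp)

lemma hasMean_pow_one_gaussianReal : HasMean (fun x => x ^ 1) 0 (gaussianReal 0 1) :=
  hasMean_pow_gaussianReal (by simp)

lemma hasMean_pow_two_gaussianReal : HasMean (fun x => x ^ 2) 1 (gaussianReal 0 1) :=
  hasMean_pow_gaussianReal <| by
    rw [integral_pow_add_two_gaussianReal, hasMean_pow_zero_gaussianReal.2]; norm_num

lemma hasMean_pow_three_gaussianReal : HasMean (fun x => x ^ 3) 0 (gaussianReal 0 1) :=
  hasMean_pow_gaussianReal <| by
    rw [integral_pow_add_two_gaussianReal, hasMean_pow_one_gaussianReal.2]; norm_num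

lemma hasMean_pow_four_gaussianReal : HasMean (fun x => x ^ 4) 3 (gaussianReal 0 1) :=
  hasMean_pow_gaussianReal <| by
    rw [integral_pow_add_two_gaussianReal, hasMean_pow_two_gaussianReal.2]; norm_num

lemma hasMean_pow_six_gaussianReal : HasMean (fun x => x ^ 6) 15 (gaussianReal 0 1) :=
  hasMean_pow_gaussianReal <| by
    rw [integral_pow_add_two_gaussianReal, hasMean_pow_four_gaussianReal.2]; norm_num

lemma HasMean.of_fin_cons {d : ℕ} {h : (Fin (d + 1) → ℝ) → ℝ} {c : ℝ}
    (H : HasMean (fun p : ℝ × (Fin d → ℝ) => h (Fin.cons p.1 p.2)) c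
      ((gaussianReal 0 1).prod (Measure.pi fun _ => gaussianReal 0 1))) :
    HasMean h c (Measure.pi fun _ => gaussianReal 0 1) := by
  refine (H.of_measurePreserving
    (measurePreserving_piFinSuccAbove (fun _ => gaussianReal 0 1) 0)).congr (fun u => ?_) rfl
  congr 1
  exact (Fin.cons_self_tail u).symm

lemma hasMean_const_pi (d : ℕ) (c : ℝ) :
    HasMean (fun _ : Fin d → ℝ => c) c (Measure.pi fun _ => gaussianReal 0 1) :=
  ⟨integrable_const c, by simp⟩

lemma hasMean_sum_sq (d : ℕ) :
    HasMean (fun u : Fin d → ℝ => ∑ i, u i ^ 2) d (Measure.pi fun _ => gaussianReal 0 1) := by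
  induction d with
  | zero => exact (hasMean_const_pi 0 0).congr (by simp) (by simp)
  | succ d ih =>
    refine HasMean.of_fin_cons (((hasMean_pow_zero_gaussianReal.mul_prod ih).add
      (hasMean_pow_two_gaussianReal.mul_prod (hasMean_const_pi d 1))).congr (fun p => ?_) ?_)
    · simp only [Fin.sum_univ_succ, Fin.cons_zero, Fin.cons_succ]; ring
    · push_cast; ring

lemma hasMean_sum_sq_pow_two (d : ℕ) :
    HasMean (fun u : Fin d → ℝ => (∑ i, u i ^ 2) ^ 2) (d * (d + 2))
      (Measure.pi fun _ => gaussianReal 0 1) := by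
  induction d with
  | zero => exact (hasMean_const_pi 0 0).congr (by simp) (by simp)
  | succ d ih =>
    refine HasMean.of_fin_cons ((((hasMean_pow_zero_gaussianReal.mul_prod ih).add
      ((hasMean_pow_two_gaussianReal.mul_prod (hasMean_sum_sq d)).const_mul 2)).add
      (hasMean_pow_four_gaussianReal.mul_prod (hasMean_const_pi d 1))).congr (fun p => ?_) ?_)
    · simp only [Fin.sum_univ_succ, Fin.cons_zero, Fin.cons_succ]; ring
    · push_cast; ring

/-- The sixth moment of the norm of a standard Gaussian vector. -/
lemma hasMean_sum_sq_pow_three (d : ℕ) :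
    HasMean (fun u : Fin d → ℝ => (∑ i, u i ^ 2) ^ 3) (d * (d + 2) * (d + 4))
      (Measure.pi fun _ => gaussianReal 0 1) := by
  induction d with
  | zero => exact (hasMean_const_pi 0 0).congr (by simp) (by simp)
  | succ d ih =>
    refine HasMean.of_fin_cons (((((hasMean_pow_zero_gaussianReal.mul_prod ih).add
      ((hasMean_pow_two_gaussianReal.mul_prod (hasMean_sum_sq_pow_two d)).const_mul 3)).add
      ((hasMean_pow_four_gaussianReal.mul_prod (hasMean_sum_sq d)).const_mul 3)).add
      (hasMean_pow_six_gaussianReal.mul_prod (hasMean_const_pi d 1))).congr (fun p => ?_) ?_)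
    · simp only [Fin.sum_univ_succ, Fin.cons_zero, Fin.cons_succ]; ring
    · push_cast; ring

lemma hasMean_sum_mul (d : ℕ) (g : Fin d → ℝ) :
    HasMean (fun u : Fin d → ℝ => ∑ i, g i * u i) 0 (Measure.pi fun _ => gaussianReal 0 1) := by
  induction d with
  | zero => exact (hasMean_const_pi 0 0).congr (by simp) (by simp)
  | succ d ih =>
    refine HasMean.of_fin_cons (((hasMean_pow_zero_gaussianReal.mul_prod (ih (Fin.tail g))).add
      (hasMean_pow_one_gaussianReal.mul_prod (hasMean_const_pi d (g 0)))).congr (fun p => ?_) ?_)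
    · simp only [Fin.sum_univ_succ, Fin.cons_zero, Fin.cons_succ, Fin.tail]; ring
    · ring

lemma hasMean_sum_mul_pow_two (d : ℕ) (g : Fin d → ℝ) :
    HasMean (fun u : Fin d → ℝ => (∑ i, g i * u i) ^ 2) (∑ i, g i ^ 2)
      (Measure.pi fun _ => gaussianReal 0 1) := by
  induction d with
  | zero => exact (hasMean_const_pi 0 0).congr (by simp) (by simp)
  | succ d ih =>
    refine HasMean.of_fin_cons ((((hasMean_pow_zero_gaussianReal.mul_prod (ih (Fin.tail g))).add
      ((hasMean_pow_one_gaussianReal.mul_prod (hasMean_sum_mul d (Fin.tail g))).const_mul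
        (2 * g 0))).add
      (hasMean_pow_two_gaussianReal.mul_prod (hasMean_const_pi d (g 0 ^ 2)))).congr
      (fun p => ?_) ?_)
    · simp only [Fin.sum_univ_succ, Fin.cons_zero, Fin.cons_succ, Fin.tail]; ring
    · simp only [Fin.sum_univ_succ, Fin.tail]; ring

lemma hasMean_sum_mul_mul_sum_sq (d : ℕ) (g : Fin d → ℝ) :
    HasMean (fun u : Fin d → ℝ => (∑ i, g i * u i) * ∑ i, u i ^ 2) 0
      (Measure.pi fun _ => gaussianReal 0 1) := by
  induction d with
  | zero => exact (hasMean_const_pi 0 0).congr (by simp) (by simp)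
  | succ d ih =>
    refine HasMean.of_fin_cons (((((hasMean_pow_zero_gaussianReal.mul_prod (ih (Fin.tail g))).add
      (hasMean_pow_two_gaussianReal.mul_prod (hasMean_sum_mul d (Fin.tail g)))).add
      ((hasMean_pow_one_gaussianReal.mul_prod (hasMean_sum_sq d)).const_mul (g 0))).add
      (hasMean_pow_three_gaussianReal.mul_prod (hasMean_const_pi d (g 0)))).congr
      (fun p => ?_) ?_)
    · simp only [Fin.sum_univ_succ, Fin.cons_zero, Fin.cons_succ, Fin.tail]; ring
    · ring

lemma hasMean_sum_mul_pow_two_mul_sum_sq (d : ℕ) (g : Fin d → ℝ) :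
    HasMean (fun u : Fin d → ℝ => (∑ i, g i * u i) ^ 2 * ∑ i, u i ^ 2)
      ((d + 2) * ∑ i, g i ^ 2) (Measure.pi fun _ => gaussianReal 0 1) := by
  induction d with
  | zero => exact (hasMean_const_pi 0 0).congr (by simp) (by simp)
  | succ d ih =>
    have h₀ := hasMean_pow_zero_gaussianReal.mul_prod (ih (Fin.tail g))
    have h₁ := (hasMean_pow_one_gaussianReal.mul_prod
      (hasMean_sum_mul_mul_sum_sq d (Fin.tail g))).const_mul (2 * g 0)
    have h₂ := hasMean_pow_two_gaussianReal.mul_prod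
      ((hasMean_sum_mul_pow_two d (Fin.tail g)).add ((hasMean_sum_sq d).const_mul (g 0 ^ 2)))
    have h₃ := (hasMean_pow_three_gaussianReal.mul_prod
      (hasMean_sum_mul d (Fin.tail g))).const_mul (2 * g 0)
    have h₄ := hasMean_pow_four_gaussianReal.mul_prod (hasMean_const_pi d (g 0 ^ 2))
    refine HasMean.of_fin_cons (((((h₀.add h₁).add h₂).add h₃).add h₄).congr (fun p => ?_) ?_)
    · simp only [Fin.sum_univ_succ, Fin.cons_zero, Fin.cons_succ, Fin.tail]; ring
    · simp only [Fin.sum_univ_succ, Fin.tail]; push_cast; ring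

lemma HasMean.of_toLp {d : ℕ} {h : EuclideanSpace ℝ (Fin d) → ℝ} {c : ℝ}
    (H : HasMean (fun u => h (WithLp.toLp 2 u)) c (Measure.pi fun _ => gaussianReal 0 1)) :
    HasMean h c (stdGaussian d) :=
  ⟨((MeasurableEquiv.toLp 2 (Fin d → ℝ)).measurableEmbedding.integrable_map_iff).2 H.1,
    ((MeasurableEquiv.toLp 2 (Fin d → ℝ)).measurableEmbedding.integral_map h).trans H.2⟩

lemma hasMean_norm_pow_six (d : ℕ) :
    HasMean (fun u => ‖u‖ ^ 6) (d * (d + 2) * (d + 4)) (stdGaussian d) := by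
  refine HasMean.of_toLp ((hasMean_sum_sq_pow_three d).congr (fun u => ?_) rfl)
  rw [show 6 = 2 * 3 from rfl, pow_mul, EuclideanSpace.real_norm_sq_eq]

lemma hasMean_inner_sq_mul_norm_sq (d : ℕ) (g : EuclideanSpace ℝ (Fin d)) :
    HasMean (fun u => inner ℝ g u ^ 2 * ‖u‖ ^ 2) ((d + 2) * ‖g‖ ^ 2) (stdGaussian d) := by
  refine HasMean.of_toLp
    ((hasMean_sum_mul_pow_two_mul_sum_sq d g).congr (fun u => ?_) ?_)
  · simp only [EuclideanSpace.real_norm_sq_eq, PiLp.inner_apply, RCLike.inner_apply, conj_trivial,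
      mul_comm]
  · rw [EuclideanSpace.real_norm_sq_eq]

/-- The quadratic Taylor bound for a function with Lipschitz gradient. -/
lemma abs_sub_sub_inner_gradient_le {E : Type*} [NormedAddCommGroup E] [InnerProductSpace ℝ E]
    [CompleteSpace E] {f : E → ℝ} {L : ℝ} (hdiff : Differentiable ℝ f)
    (hlip : ∀ x y, ‖gradient f x - gradient f y‖ ≤ L * ‖x - y‖) (x v : E) :
    |f (x + v) - f x - inner ℝ (gradient f x) v| ≤ L / 2 * ‖v‖ ^ 2 := by
  have hd (t : ℝ) : HasDerivAt (fun s : ℝ => f (x + s • v) - f x - s * inner ℝ (gradient f x) v)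
      (inner ℝ (gradient f (x + t • v) - gradient f x) v) t := by
    have hline : HasDerivAt (fun s : ℝ => x + s • v) v t := by
      simpa using ((hasDerivAt_id t).smul_const v).const_add x
    have hf := ((hdiff (x + t • v)).hasGradientAt.hasFDerivAt.comp_hasDerivAt t hline)
    refine ((hf.sub_const (f x)).sub
      ((hasDerivAt_id t).mul_const (inner ℝ (gradient f x) v))).congr_deriv ?_
    simp [inner_sub_left]
  have hB (t : ℝ) : HasDerivAt (fun s : ℝ => L / 2 * ‖v‖ ^ 2 * s ^ 2) (L * ‖v‖ ^ 2 * t) t := by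
    refine ((hasDerivAt_pow 2 t).const_mul (L / 2 * ‖v‖ ^ 2)).congr_deriv ?_
    norm_num
    ring
  have h := image_norm_le_of_norm_deriv_right_le_deriv_boundary (a := 0) (b := 1)
    (fun t _ => (hd t).continuousAt.continuousWithinAt) (fun t _ => (hd t).hasDerivWithinAt)
    (by simp) hB (fun t ht => ?_) (Set.right_mem_Icc.2 zero_le_one)
  · simpa using h
  · calc ‖inner ℝ (gradient f (x + t • v) - gradient f x) v‖
        ≤ ‖gradient f (x + t • v) - gradient f x‖ * ‖v‖ := norm_inner_le_norm _ _
      _ ≤ L * ‖x + t • v - x‖ * ‖v‖ := by gcongr; exact hlip _ _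
      _ = L * ‖v‖ ^ 2 * t := by
        rw [add_sub_cancel_left, norm_smul, Real.norm_of_nonneg ht.1]
        ring

lemma norm_sq_gaussian_estimator_le {E : Type*} [NormedAddCommGroup E] [InnerProductSpace ℝ E]
    [CompleteSpace E] {f : E → ℝ} {L μ : ℝ} (hμ : 0 < μ) (hdiff : Differentiable ℝ f)
    (hlip : ∀ x y, ‖gradient f x - gradient f y‖ ≤ L * ‖x - y‖) (x u : E) :
    ‖((f (x + μ • u) - f x) / μ) • u‖ ^ 2
      ≤ 2 * (inner ℝ (gradient f x) u ^ 2 * ‖u‖ ^ 2) + μ ^ 2 * L ^ 2 / 2 * ‖u‖ ^ 6 := by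
  have h := abs_sub_sub_inner_gradient_le hdiff hlip x (μ • u)
  set q := (f (x + μ • u) - f x) / μ with hq
  set a := inner ℝ (gradient f x) u with ha
  have hr : |q - a| ≤ μ * L / 2 * ‖u‖ ^ 2 := by
    have hqμ : f (x + μ • u) - f x = μ * q := by rw [hq]; field_simp
    rw [hqμ, inner_smul_right, ← ha, ← mul_sub, abs_mul, abs_of_pos hμ, norm_smul,
      Real.norm_of_nonneg hμ.le] at h
    refine le_of_mul_le_mul_left (h.trans_eq ?_) hμ
    ring
  have hsq : (q - a) ^ 2 ≤ (μ * L / 2 * ‖u‖ ^ 2) ^ 2 :=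
    sq_le_sq.2 (hr.trans (le_abs_self _))
  have hqsq : q ^ 2 ≤ 2 * a ^ 2 + 2 * (μ * L / 2 * ‖u‖ ^ 2) ^ 2 := by
    nlinarith [sq_nonneg (q - 2 * a)]
  calc ‖q • u‖ ^ 2 = q ^ 2 * ‖u‖ ^ 2 := by
        rw [norm_smul, mul_pow, Real.norm_eq_abs, sq_abs]
    _ ≤ (2 * a ^ 2 + 2 * (μ * L / 2 * ‖u‖ ^ 2) ^ 2) * ‖u‖ ^ 2 := by gcongr
    _ = _ := by ring

/-- Second moment bound for the two-point Gaussian gradient estimator: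
`E_u[‖ĝ_μ(x; u)‖²] ≤ 2(d + 4)‖∇f(x)‖² + μ² L² (d + 6)³ / 2`. -/
theorem gaussian_estimator_second_moment_bound
    (d : ℕ) (L μ : ℝ) (hμ : 0 < μ)
    (f : EuclideanSpace ℝ (Fin d) → ℝ)
    (hdiff : Differentiable ℝ f)
    (hlip : ∀ x y, ‖gradient f x - gradient f y‖ ≤ L * ‖x - y‖)
    (x : EuclideanSpace ℝ (Fin d)) :
    ∫ u, ‖((f (x + μ • u) - f x) / μ) • u‖ ^ 2 ∂(stdGaussian d)
      ≤ 2 * ((d : ℝ) + 4) * ‖gradient f x‖ ^ 2 + μ ^ 2 * L ^ 2 * ((d : ℝ) + 6) ^ 3 / 2 := by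
  have hmean := ((hasMean_inner_sq_mul_norm_sq d (gradient f x)).const_mul 2).add
    ((hasMean_norm_pow_six d).const_mul (μ ^ 2 * L ^ 2 / 2))
  have hd : (d : ℝ) * (d + 2) * (d + 4) ≤ (d + 6) ^ 3 := by
    have : (0 : ℝ) ≤ d := d.cast_nonneg
    nlinarith [pow_nonneg this 2]
  calc ∫ u, ‖((f (x + μ • u) - f x) / μ) • u‖ ^ 2 ∂(stdGaussian d)
      ≤ _ := integral_mono_of_nonneg (.of_forall fun _ => by positivity) hmean.1
        (.of_forall fun u => norm_sq_gaussian_estimator_le hμ hdiff hlip x u)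
    _ = 2 * ((d + 2) * ‖gradient f x‖ ^ 2)
        + μ ^ 2 * L ^ 2 / 2 * (d * (d + 2) * (d + 4)) := hmean.2
    _ ≤ 2 * ((d + 4) * ‖gradient f x‖ ^ 2) + μ ^ 2 * L ^ 2 / 2 * (d + 6) ^ 3 := by
      gcongr
      norm_num
    _ = _ := by ring
end
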